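/- arXiv:1808.04712 — 6 statements merged into one kernel-verified Lean document; each statement's English description precedes it below -/
import Mathlib

section
/- Let L > 0, let c : ℝ → ℝ be non-decreasing, convex and differentiable, and suppose both c and its derivative c' are L-Lipschitz. Let k > 0 and let a, δ ∈ ℝ with 0 ≤ a ≤ δ, and let t ∈ ℝ. Then ((a + k)·c(t + k) − a·c(t)) / k ≤ c(t) + a·c'(t) + k·L·(δ + 1). -/
/-!
The discrete marginal cost splits as `c (t + k) + a * slope c t (t + k)`. The first summand is
controlled by the Lipschitz bound on `c`. For the second, if `f' z ≤ m + M * (z - x)`, then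
subtracting the parabola `M / 2 * (z - x) ^ 2` from `f` leaves a function with derivative at most
`m`, so the mean value theorem bounds its slope.
-/

open Set

theorem add_mul_sub_mul_div_eq_add_mul_slope {𝕜 : Type*} [Field 𝕜] (f : 𝕜 → 𝕜) (a t : 𝕜) {k : 𝕜}
    (hk : k ≠ 0) :
    ((a + k) * f (t + k) - a * f t) / k = f (t + k) + a * slope f t (t + k) := by
  rw [slope_def_field, add_sub_cancel_left]
  field_simp
  ring

theorem slope_le_of_deriv_le_add_mul {f : ℝ → ℝ} {x y m M : ℝ} (hxy : x < y)
    (hf : ContinuousOn f (Icc x y)) (hf' : DifferentiableOn ℝ f (Ioo x y))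
    (hM : ∀ z ∈ Ioo x y, deriv f z ≤ m + M * (z - x)) :
    slope f x y ≤ m + M / 2 * (y - x) := by
  let g : ℝ → ℝ := fun z ↦ f z - M / 2 * (z - x) ^ 2
  have hg (z : ℝ) (hz : z ∈ Ioo x y) : HasDerivAt g (deriv f z - M * (z - x)) z := by
    have hfz := (hf'.differentiableAt (isOpen_Ioo.mem_nhds hz)).hasDerivAt
    have hparabola := (((hasDerivAt_id' z).sub_const x).fun_pow 2).const_mul (M / 2)
    exact (hfz.fun_sub hparabola).congr_deriv (by ring)
  have hslope_eq : slope g x y = slope f x y - M / 2 * (y - x) := by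
    have hyx : y - x ≠ 0 := sub_ne_zero.2 hxy.ne'
    simp only [slope_def_field, g]
    field_simp
    ring
  obtain ⟨z, hz, hderiv⟩ := exists_deriv_eq_slope' g hxy (hf.sub (by fun_prop))
    fun z hz ↦ (hg z hz).differentiableAt.differentiableWithinAt
  rw [(hg z hz).deriv, hslope_eq] at hderiv
  linarith [hM z hz]

theorem stmt_0_general {L : ℝ} {c : ℝ → ℝ} (hdiff : Differentiable ℝ c)
    (hlip : ∀ x y : ℝ, |c y - c x| ≤ L * |y - x|)
    (hlip' : ∀ x y : ℝ, |deriv c y - deriv c x| ≤ L * |y - x|)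
    {k : ℝ} (hk : 0 < k) {a : ℝ} (ha : 0 ≤ a) (t : ℝ) :
    ((a + k) * c (t + k) - a * c t) / k ≤ c t + a * deriv c t + k * L * (a / 2 + 1) := by
  have hcost : c (t + k) ≤ c t + L * k := by
    have h := (le_abs_self _).trans (hlip t (t + k))
    rwa [add_sub_cancel_left, abs_of_pos hk, sub_le_iff_le_add'] at h
  have hslope : slope c t (t + k) ≤ deriv c t + L / 2 * k := by
    have hderiv (z : ℝ) (hz : z ∈ Ioo t (t + k)) : deriv c z ≤ deriv c t + L * (z - t) := by
      have h := (le_abs_self _).trans (hlip' t z)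
      rwa [abs_of_pos (sub_pos.2 hz.1), sub_le_iff_le_add'] at h
    simpa only [add_sub_cancel_left] using slope_le_of_deriv_le_add_mul
      (lt_add_of_pos_right t hk) hdiff.continuous.continuousOn hdiff.differentiableOn hderiv
  calc ((a + k) * c (t + k) - a * c t) / k
      = c (t + k) + a * slope c t (t + k) := add_mul_sub_mul_div_eq_add_mul_slope c a t hk.ne'
    _ ≤ (c t + L * k) + a * (deriv c t + L / 2 * k) := by gcongr
    _ = c t + a * deriv c t + k * L * (a / 2 + 1) := by ring

/-- Lemma 2 of the paper (first inequality), per-resource analytic form: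
if `c` is non-decreasing, convex, differentiable, and both `c` and `deriv c`
are `L`-Lipschitz, then the discrete marginal cost of adding a packet of size
`k` is bounded by the continuous marginal cost plus `k·L·(δ+1)`. -/
theorem stmt_0 (L : ℝ) (hL : 0 < L) (c : ℝ → ℝ)
    (hmono : Monotone c) (hconv : ConvexOn ℝ Set.univ c)
    (hdiff : Differentiable ℝ c)
    (hlip : ∀ x y : ℝ, |c y - c x| ≤ L * |y - x|)
    (hlip' : ∀ x y : ℝ, |deriv c y - deriv c x| ≤ L * |y - x|)
    (k : ℝ) (hk : 0 < k) (a δ t : ℝ) (ha0 : 0 ≤ a) (haδ : a ≤ δ) :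
    ((a + k) * c (t + k) - a * c t) / k ≤ c t + a * deriv c t + k * L * (δ + 1) := by
  have haδ' : a / 2 ≤ δ := (half_le_self ha0).trans haδ
  exact (stmt_0_general hdiff hlip hlip' hk ha0 t).trans (by gcongr)
end

section
/- Let L > 0, let c : ℝ → ℝ be non-decreasing, convex and differentiable, and suppose both c and its derivative c' are L-Lipschitz. Let k > 0 and let a, δ ∈ ℝ with 0 < a ≤ δ, and let t ∈ ℝ. Then (a·c(t) − (a − k)·c(t − k)) / k ≥ c(t) + a·c'(t) − k·L·(δ + 1). -/
/-!
Since `a · c t - (a - k) · c (t - k) = k · c (t - k) + a · (c t - c (t - k))`, the cost decrease per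
unit of load removed is `c (t - k) + a · slope c (t - k) t`. Compared with the marginal cost
`c t + a · c' t`, the first term loses at most `K k` when `c` is `K`-Lipschitz. By the mean value
theorem the slope is a value of `c'` within distance `k` of `t`, so the second term loses at most
`a M k` when `c'` is `M`-Lipschitz.
-/

open Set
open scoped NNReal

theorem removal_gain_div_eq_add_mul_slope {𝕜 : Type*} [Field 𝕜] {c : 𝕜 → 𝕜} {k : 𝕜} (hk : k ≠ 0)
    (a t : 𝕜) :
    (a * c t - (a - k) * c (t - k)) / k = c (t - k) + a * slope c (t - k) t := by
  rw [slope_def_field, sub_sub_cancel]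
  field_simp
  ring

theorem sub_mul_le_of_lipschitzOnWith {f : ℝ → ℝ} {s : Set ℝ} {K : ℝ≥0} (hf : LipschitzOnWith K f s)
    {x y : ℝ} (hx : x ∈ s) (hy : y ∈ s) (hxy : x ≤ y) : f y - K * (y - x) ≤ f x := by
  have h := hf.le_add_mul hy hx
  rw [Real.dist_eq, abs_of_nonneg (sub_nonneg.2 hxy)] at h
  exact sub_le_iff_le_add.2 h

theorem deriv_right_sub_mul_le_slope {f f' : ℝ → ℝ} {M : ℝ≥0} {x y : ℝ} (hxy : x < y)
    (hfc : ContinuousOn f (Icc x y)) (hf : ∀ z ∈ Ioo x y, HasDerivAt f (f' z) z)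
    (hf' : LipschitzOnWith M f' (Ioc x y)) : f' y - M * (y - x) ≤ slope f x y := by
  obtain ⟨ξ, hξ, hslope⟩ := exists_hasDerivAt_eq_slope f f' hxy hfc hf
  calc
    f' y - M * (y - x) ≤ f' y - M * (y - ξ) := by gcongr; exact hξ.1.le
    _ ≤ f' ξ := sub_mul_le_of_lipschitzOnWith hf' (Ioo_subset_Ioc_self hξ)
      (right_mem_Ioc.2 hxy) hξ.2.le
    _ = slope f x y := by rw [hslope, slope_def_field]

-- `c' t` is the left derivative of `c` at `t`: `c'` is left-continuous there by `hlip'`.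
theorem stmt_1_general {c c' : ℝ → ℝ} {K M : ℝ≥0} {k a δ : ℝ} (t : ℝ) (hk : 0 < k)
    (hc : ∀ s ∈ Ioo (t - k) t, HasDerivAt c (c' s) s)
    (hlip : LipschitzOnWith K c (Icc (t - k) t)) (hlip' : LipschitzOnWith M c' (Ioc (t - k) t))
    (ha : 0 ≤ a) (haδ : a ≤ δ) :
    c t + a * c' t - k * (K + M * δ) ≤ (a * c t - (a - k) * c (t - k)) / k := by
  have hlt : t - k < t := sub_lt_self t hk
  have hvalue : c t - K * k ≤ c (t - k) := by
    simpa only [sub_sub_cancel] using sub_mul_le_of_lipschitzOnWith hlip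
      (left_mem_Icc.2 hlt.le) (right_mem_Icc.2 hlt.le) hlt.le
  have hslope : c' t - M * k ≤ slope c (t - k) t := by
    simpa only [sub_sub_cancel] using deriv_right_sub_mul_le_slope hlt hlip.continuousOn hc hlip'
  calc
    c t + a * c' t - k * (K + M * δ) ≤ c t + a * c' t - k * (K + M * a) := by gcongr
    _ = (c t - K * k) + a * (c' t - M * k) := by ring
    _ ≤ c (t - k) + a * slope c (t - k) t := by gcongr
    _ = (a * c t - (a - k) * c (t - k)) / k := (removal_gain_div_eq_add_mul_slope hk.ne' a t).symm

/-- Lemma 2 of the paper (second inequality), per-resource analytic form: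
if `c` is non-decreasing, convex, differentiable, and both `c` and `deriv c`
are `L`-Lipschitz, then the discrete marginal gain of removing a packet of size
`k` is at least the continuous marginal cost minus `k·L·(δ+1)`. -/
theorem stmt_1 (L : ℝ) (hL : 0 < L) (c : ℝ → ℝ)
    (hmono : Monotone c) (hconv : ConvexOn ℝ Set.univ c)
    (hdiff : Differentiable ℝ c)
    (hlip : ∀ x y : ℝ, |c y - c x| ≤ L * |y - x|)
    (hlip' : ∀ x y : ℝ, |deriv c y - deriv c x| ≤ L * |y - x|)
    (k : ℝ) (hk : 0 < k) (a δ t : ℝ) (ha0 : 0 < a) (haδ : a ≤ δ) :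
    (a * c t - (a - k) * c (t - k)) / k ≥ c t + a * deriv c t - k * L * (δ + 1) := by
  lift L to ℝ≥0 using hL.le
  linarith [stmt_1_general t hk (fun s _ ↦ (hdiff s).hasDerivAt)
    (LipschitzOnWith.of_dist_le_mul fun x _ y _ ↦ hlip y x)
    (LipschitzOnWith.of_dist_le_mul fun x _ y _ ↦ hlip' y x) ha0.le haδ]
end

section
/- Let L > 0 and k > 0. Let c_e, c_f : ℝ → ℝ be non-decreasing, convex and differentiable functions such that c_e, c_f and their derivatives c'_e, c'_f are all L-Lipschitz. Let δ ≥ 0 and let a_e, a_f, t_e, t_f ∈ ℝ with 0 < a_e ≤ δ and 0 ≤ a_f ≤ δ. If a_e·c_e(t_e) − (a_e − k)·c_e(t_e − k) ≤ (a_f + k)·c_f(t_f + k) − a_f·c_f(t_f), then (c_f(t_f) + a_f·c'_f(t_f)) − (c_e(t_e) + a_e·c'_e(t_e)) ≥ −2·k·L·(δ + 1). -/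
/-!
With player load `a` and total load `t`, the player's cost after changing the load by `h` is
`(a + h) * c (t + h)`, whose derivative at `h = 0` is the marginal cost `c t + a * c' t`. Since `c`
and `c'` are Lipschitz, the linear approximation is off by `O(h ^ 2)`. Applying this with `h = -k`
on `e` and `h = k` on `f` and dividing by `k` leaves an error of order `k`.
-/

theorem norm_sub_sub_smul_le_of_norm_deriv_sub_le {𝕜 E : Type*} [RCLike 𝕜]
    [NormedAddCommGroup E] [NormedSpace 𝕜 E] {f f' : 𝕜 → E} {L : ℝ} {x y : 𝕜}
    (hf : ∀ z ∈ segment ℝ x y, HasDerivWithinAt f (f' z) (segment ℝ x y) z)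
    (hL : 0 ≤ L) (hf' : ∀ z ∈ segment ℝ x y, ‖f' z - f' x‖ ≤ L * ‖z - x‖) :
    ‖f y - f x - (y - x) • f' x‖ ≤ L * ‖y - x‖ ^ 2 := by
  have hderiv : ∀ z ∈ segment ℝ x y,
      HasDerivWithinAt (fun z ↦ f z - z • f' x) (f' z - f' x) (segment ℝ x y) z := fun z hz ↦ by
    simpa only [one_smul, id_eq] using
      (hf z hz).fun_sub ((hasDerivWithinAt_id z _).smul_const (f' x))
  have hbound : ∀ z ∈ segment ℝ x y, ‖f' z - f' x‖ ≤ L * ‖y - x‖ := fun z hz ↦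
    (hf' z hz).trans (mul_le_mul_of_nonneg_left (norm_sub_le_of_mem_segment hz) hL)
  calc ‖f y - f x - (y - x) • f' x‖ = ‖(f y - y • f' x) - (f x - x • f' x)‖ := by
        congr 1; module
    _ ≤ L * ‖y - x‖ * ‖y - x‖ :=
        (convex_segment x y).norm_image_sub_le_of_norm_hasDerivWithin_le hderiv hbound
          (left_mem_segment ℝ x y) (right_mem_segment ℝ x y)
    _ = L * ‖y - x‖ ^ 2 := by ring

/-- The continuous marginal cost of a player with load `a` on a resource with cost function `c` and
total load `t`: the derivative of `h ↦ (a + h) * c (t + h)` at `h = 0` when `c` is differentiable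
at `t`. -/
noncomputable def marginalCost (c : ℝ → ℝ) (a t : ℝ) : ℝ :=
  c t + a * deriv c t

/-- The change in the cost of a player with load `a` on a resource with cost function `c` and total
load `t` when the player's load changes by `h`. Adding a packet of size `k` is `h = k`, removing one
is `h = -k`; the gain from a removal is the negative of this change. -/
def costChange (c : ℝ → ℝ) (a t h : ℝ) : ℝ :=
  (a + h) * c (t + h) - a * c t

theorem abs_costChange_sub_mul_marginalCost_le {c : ℝ → ℝ} {M L t : ℝ} (a h : ℝ)
    (hc : Differentiable ℝ c) (hM : ∀ s, |c s - c t| ≤ M * |s - t|)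
    (hL : 0 ≤ L) (hc' : ∀ s, |deriv c s - deriv c t| ≤ L * |s - t|) :
    |costChange c a t h - h * marginalCost c a t| ≤ (M + |a| * L) * h ^ 2 := by
  have hincr : |c (t + h) - c t| ≤ M * |h| := by
    simpa only [add_sub_cancel_left] using hM (t + h)
  have hlinear : |c (t + h) - c t - h * deriv c t| ≤ L * h ^ 2 := by
    simpa only [add_sub_cancel_left, smul_eq_mul, Real.norm_eq_abs, sq_abs] using
      norm_sub_sub_smul_le_of_norm_deriv_sub_le (y := t + h)
        (fun z _ ↦ (hc z).hasDerivAt.hasDerivWithinAt) hL fun z _ ↦ hc' z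
  calc |costChange c a t h - h * marginalCost c a t|
      = |h * (c (t + h) - c t) + a * (c (t + h) - c t - h * deriv c t)| := by
        rw [costChange, marginalCost]; ring_nf
    _ ≤ |h| * |c (t + h) - c t| + |a| * |c (t + h) - c t - h * deriv c t| := by
        rw [← abs_mul, ← abs_mul]; exact abs_add_le _ _
    _ ≤ |h| * (M * |h|) + |a| * (L * h ^ 2) := by gcongr
    _ = (M + |a| * L) * h ^ 2 := by rw [← sq_abs h]; ring

theorem stmt_2_general {L k : ℝ} (hk : 0 < k) {ce cf : ℝ → ℝ}
    (hce_diff : Differentiable ℝ ce) (hcf_diff : Differentiable ℝ cf)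
    (hce_lip : ∀ x y : ℝ, |ce y - ce x| ≤ L * |y - x|)
    (hcf_lip : ∀ x y : ℝ, |cf y - cf x| ≤ L * |y - x|)
    (hce_lip' : ∀ x y : ℝ, |deriv ce y - deriv ce x| ≤ L * |y - x|)
    (hcf_lip' : ∀ x y : ℝ, |deriv cf y - deriv cf x| ≤ L * |y - x|)
    {δ ae af te tf : ℝ} (hae : |ae| ≤ δ) (haf : |af| ≤ δ)
    (h : ae * ce te - (ae - k) * ce (te - k) ≤ (af + k) * cf (tf + k) - af * cf tf) :
    (cf tf + af * deriv cf tf) - (ce te + ae * deriv ce te) ≥ -(2 * k * L * (δ + 1)) := by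
  have hL : 0 ≤ L := by simpa using (abs_nonneg _).trans (hce_lip 0 1)
  have hchange : -costChange ce ae te (-k) ≤ costChange cf af tf k := by
    simpa only [costChange, neg_sub, ← sub_eq_add_neg] using h
  have he : costChange ce ae te (-k) + k * marginalCost ce ae te ≤ (L + |ae| * L) * k ^ 2 := by
    simpa only [neg_sq, neg_mul, sub_neg_eq_add] using (le_abs_self _).trans <|
      abs_costChange_sub_mul_marginalCost_le ae (-k) hce_diff (hce_lip te) hL (hce_lip' te)
  have hf : costChange cf af tf k - k * marginalCost cf af tf ≤ (L + |af| * L) * k ^ 2 :=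
    (le_abs_self _).trans <|
      abs_costChange_sub_mul_marginalCost_le af k hcf_diff (hcf_lip tf) hL (hcf_lip' tf)
  change -(2 * k * L * (δ + 1)) ≤ marginalCost cf af tf - marginalCost ce ae te
  refine le_of_mul_le_mul_left ?_ hk
  calc k * -(2 * k * L * (δ + 1)) = -((L + δ * L) * k ^ 2) - (L + δ * L) * k ^ 2 := by ring
    _ ≤ -((L + |ae| * L) * k ^ 2) - (L + |af| * L) * k ^ 2 := by gcongr
    _ ≤ k * (marginalCost cf af tf - marginalCost ce ae te) := by linarith

/-- Analytic core of Lemma 3 of the paper: if the `k`-integral marginal gain of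
removing a packet from resource `e` is at most the `k`-integral marginal cost of
adding a packet to resource `f`, then the difference of the continuous marginal
costs is at least `−2kL(δ+1)`. -/
theorem stmt_2 (L k : ℝ) (hL : 0 < L) (hk : 0 < k)
    (ce cf : ℝ → ℝ)
    (hce_mono : Monotone ce) (hcf_mono : Monotone cf)
    (hce_conv : ConvexOn ℝ Set.univ ce) (hcf_conv : ConvexOn ℝ Set.univ cf)
    (hce_diff : Differentiable ℝ ce) (hcf_diff : Differentiable ℝ cf)
    (hce_lip : ∀ x y : ℝ, |ce y - ce x| ≤ L * |y - x|)
    (hcf_lip : ∀ x y : ℝ, |cf y - cf x| ≤ L * |y - x|)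
    (hce_lip' : ∀ x y : ℝ, |deriv ce y - deriv ce x| ≤ L * |y - x|)
    (hcf_lip' : ∀ x y : ℝ, |deriv cf y - deriv cf x| ≤ L * |y - x|)
    (δ ae af te tf : ℝ) (hδ : 0 ≤ δ)
    (hae : 0 < ae) (haeδ : ae ≤ δ) (haf : 0 ≤ af) (hafδ : af ≤ δ)
    (h : ae * ce te - (ae - k) * ce (te - k) ≤ (af + k) * cf (tf + k) - af * cf tf) :
    (cf tf + af * deriv cf tf) - (ce te + ae * deriv ce te) ≥ -(2 * k * L * (δ + 1)) :=
  stmt_2_general hk hce_diff hcf_diff hce_lip hcf_lip hce_lip' hcf_lip'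
    ((abs_of_pos hae).trans_le haeδ) ((abs_of_nonneg haf).trans_le hafδ) h
end

section
/- Let E be a finite set, ρ a rank function on E, k > 0 with ρ(U)/k ∈ ℕ for all U ⊆ E, and d > 0 with d/k ∈ ℕ and d ≤ ρ(E). Fix s ∈ ℝ^E_{≥0} and for each e ∈ E a non-negative, non-decreasing, differentiable, convex function c_e : ℝ → ℝ, and define f(y) = Σ_{e∈E} c_e(s_e + y_e)·y_e for y ∈ ℝ^E_{≥0}. Then a point x ∈ P^k_ρ(d) minimizes f over P^k_ρ(d) if and only if for every ordered pair (e, f) ∈ E × E the following holds: if there exists α > 0 such that x + α(χ_e − χ_f) ∈ P_ρ(d), then (x_e + k)·c_e(s_e + x_e + k) − x_e·c_e(s_e + x_e) ≥ x_f·c_f(s_f + x_f) − (x_f − k)·c_f(s_f + x_f − k). -/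
/-- A rank function: submodular, monotone, normalized set function. -/
def IsRank {E : Type*} [Fintype E] [DecidableEq E] (ρ : Finset E → ℝ) : Prop :=
  (∀ U V : Finset E, ρ (U ∪ V) + ρ (U ∩ V) ≤ ρ U + ρ V) ∧
  (∀ U V : Finset E, U ⊆ V → ρ U ≤ ρ V) ∧ ρ ∅ = 0

/-- Membership in the polymatroid base polytope `P_ρ(d)`. -/
def memBase {E : Type*} [Fintype E] [DecidableEq E] (ρ : Finset E → ℝ) (d : ℝ)
    (x : E → ℝ) : Prop :=
  (∀ e, 0 ≤ x e) ∧ (∀ U : Finset E, ∑ e ∈ U, x e ≤ ρ U) ∧ (∑ e, x e = d)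

/-- Membership in the `k`-integral base polytope `P^k_ρ(d)`. -/
def memKBase {E : Type*} [Fintype E] [DecidableEq E] (ρ : Finset E → ℝ) (d k : ℝ)
    (x : E → ℝ) : Prop :=
  memBase ρ d x ∧ ∀ e, ∃ q : ℕ, x e = k * q

/-!
If `x` and `y` are distinct `k`-integral bases with `x e < y e`, compare the least `x`-tight set
`D ∋ e` with the greatest `y`-tight set `T ∌ e`. By submodularity `y (D \ T) ≤ x (D \ T)`, so some
`f ∈ D \ T` has `y f < x f`, and no tight set blocks moving a packet from `f` to `e` in `x`, or from
`e` to `f` in `y`. The second move brings `y` closer to `x`; by local optimality of `x` and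
monotonicity of the increments it does not raise the cost. Hence `x` is a global minimizer.
-/

open Finset

section Increments

variable {𝕜 : Type*} [Field 𝕜] [LinearOrder 𝕜] [IsStrictOrderedRing 𝕜] {S : Set 𝕜} {c : 𝕜 → 𝕜}
  {k t u : 𝕜}

theorem convexOn_increment_le (hc : ConvexOn 𝕜 S c) (hk : 0 < k) (htu : t ≤ u) (ht : t ∈ S)
    (hu : u + k ∈ S) : c (t + k) - c t ≤ c (u + k) - c u := by
  -- Jensen at `t + k` and `u`, whose barycentric coordinates in `[t, u + k]` are swapped.
  have hlen : 0 < u - t + k := by linarith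
  have hsum : (u - t) / (u - t + k) + k / (u - t + k) = 1 := by field
  have ha : 0 ≤ (u - t) / (u - t + k) := div_nonneg (by linarith) hlen.le
  have hb : 0 ≤ k / (u - t + k) := div_nonneg hk.le hlen.le
  have jensen_left := hc.2 ht hu ha hb hsum
  have jensen_right := hc.2 ht hu hb ha (by linarith)
  have left_eq : (u - t) / (u - t + k) * t + k / (u - t + k) * (u + k) = t + k := by field
  have right_eq : k / (u - t + k) * t + (u - t) / (u - t + k) * (u + k) = u := by field
  simp only [smul_eq_mul, left_eq, right_eq] at jensen_left jensen_right
  linear_combination jensen_left + jensen_right + (c t + c (u + k)) * hsum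

theorem increment_add_mul_self_le (hc : ConvexOn 𝕜 Set.univ c) (hmono : Monotone c) (s : 𝕜)
    (hk : 0 < k) (htu : t ≤ u) (hu : 0 ≤ u) :
    c (s + (t + k)) * (t + k) - c (s + t) * t ≤ c (s + (u + k)) * (u + k) - c (s + u) * u := by
  have hincr : c (s + (t + k)) - c (s + t) ≤ c (s + (u + k)) - c (s + u) := by
    simpa only [add_assoc] using
      convexOn_increment_le hc hk (add_le_add_right htu s) (Set.mem_univ _) (Set.mem_univ _)
  have hnonneg : c (s + t) ≤ c (s + (t + k)) := hmono (by linarith)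
  have hend : c (s + (t + k)) ≤ c (s + (u + k)) := hmono (by linarith)
  linear_combination u * hincr + (u - t) * hnonneg + k * hend

end Increments

section Submodular

variable {α R : Type*} [Lattice α]

/-- A function `f` on a lattice is submodular if `f (a ⊔ b) + f (a ⊓ b) ≤ f a + f b`. It is what
lets tight sets of a polymatroid be uncrossed. -/
def IsSubmodular [Add R] [LE R] (f : α → R) : Prop :=
  ∀ a b, f (a ⊔ b) + f (a ⊓ b) ≤ f a + f b

theorem IsSubmodular.update_top [OrderTop α] [DecidableEq α] [AddCommMonoid R] [PartialOrder R]
    [IsOrderedAddMonoid R] {f : α → R} (hf : IsSubmodular f) {r : R} (hr : r ≤ f ⊤) :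
    IsSubmodular (Function.update f ⊤ r) := by
  intro a b
  by_cases ha : a = ⊤
  · simp [ha]
  by_cases hb : b = ⊤
  · simp [hb, add_comm]
  have hab : a ⊓ b ≠ ⊤ := fun h => ha (inf_eq_top_iff.1 h).1
  have hle : Function.update f ⊤ r ≤ f := update_le_self_iff.2 hr
  rw [Function.update_of_ne ha, Function.update_of_ne hb, Function.update_of_ne hab]
  exact (add_le_add_left (hle _) _).trans (hf a b)

end Submodular

section Tight

variable {E R : Type*}

/-- A set `U` is tight for `x` if the constraint `x(U) ≤ r(U)` is attained. Tight sets are the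
obstructions to increasing coordinates of `x`. -/
def IsTight [AddCommMonoid R] (r : Finset E → R) (x : E → R) (U : Finset E) : Prop :=
  ∑ a ∈ U, x a = r U

variable [DecidableEq E] [CommRing R] [LinearOrder R] [IsStrictOrderedRing R]
  {r : Finset E → R} {x y : E → R} {D T : Finset E} {e : E}

theorem isSublattice_setOf_isTight (hr : IsSubmodular r) (hx : ∀ U, ∑ a ∈ U, x a ≤ r U) :
    IsSublattice {U | IsTight r x U} := by
  have key : ∀ U V, IsTight r x U → IsTight r x V →
      IsTight r x (U ∪ V) ∧ IsTight r x (U ∩ V) := by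
    intro U V hU hV
    have hmodular := sum_union_inter (s₁ := U) (s₂ := V) (f := x)
    have hsub : r (U ∪ V) + r (U ∩ V) ≤ r U + r V := hr U V
    have hunion := hx (U ∪ V)
    have hinter := hx (U ∩ V)
    unfold IsTight at *
    constructor <;> linarith
  exact ⟨fun U hU V hV => (key U V hU hV).1, fun U hU V hV => (key U V hU hV).2⟩

theorem exists_isLeast_isTight_mem [Fintype E] (hr : IsSubmodular r)
    (hx : ∀ U, ∑ a ∈ U, x a ≤ r U) (htop : IsTight r x univ) (e : E) :
    ∃ D, IsLeast {U | IsTight r x U ∧ e ∈ U} D := by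
  have hclosed : InfClosed {U | IsTight r x U ∧ e ∈ U} := fun U hU V hV =>
    ⟨(isSublattice_setOf_isTight hr hx).infClosed hU.1 hV.1, mem_inter.2 ⟨hU.2, hV.2⟩⟩
  obtain ⟨D, hD⟩ := (Set.toFinite {U | IsTight r x U ∧ e ∈ U}).exists_minimal
    ⟨univ, htop, mem_univ e⟩
  exact ⟨D, hclosed.codirectedOn.minimal_iff_isLeast.1 hD⟩

theorem exists_isGreatest_isTight_notMem [Finite E] (hr : IsSubmodular r)
    (hx : ∀ U, ∑ a ∈ U, x a ≤ r U) (hbot : r ∅ = 0) (e : E) :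
    ∃ T, IsGreatest {U | IsTight r x U ∧ e ∉ U} T := by
  have hclosed : SupClosed {U | IsTight r x U ∧ e ∉ U} := fun U hU V hV =>
    ⟨(isSublattice_setOf_isTight hr hx).supClosed hU.1 hV.1, notMem_union.2 ⟨hU.2, hV.2⟩⟩
  obtain ⟨T, hT⟩ := (Set.toFinite {U | IsTight r x U ∧ e ∉ U}).exists_maximal
    ⟨∅, by simp [IsTight, hbot], notMem_empty e⟩
  exact ⟨T, hclosed.directedOn.maximal_iff_isGreatest.1 hT⟩

theorem IsTight.sum_sdiff_le (hr : IsSubmodular r) (hx : ∀ U, ∑ a ∈ U, x a ≤ r U)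
    (hy : ∀ U, ∑ a ∈ U, y a ≤ r U) (hD : IsTight r x D) (hT : IsTight r y T) :
    ∑ a ∈ D \ T, y a ≤ ∑ a ∈ D \ T, x a := by
  have hsub : r (D ∪ T) + r (D ∩ T) ≤ r D + r T := hr D T
  have hxD : ∑ a ∈ D ∩ T, x a + ∑ a ∈ D \ T, x a = r D :=
    (sum_inter_add_sum_sdiff D T x).trans hD
  have hyDT : ∑ a ∈ D \ T, y a + r T = ∑ a ∈ D ∪ T, y a := by
    rw [← hT, ← sum_union sdiff_disjoint, sdiff_union_self_eq_union]
  linarith [hy (D ∪ T), hx (D ∩ T)]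

theorem IsSubmodular.exists_symmetric_exchange [Fintype E] (hr : IsSubmodular r) (hbot : r ∅ = 0)
    (hx : ∀ U, ∑ a ∈ U, x a ≤ r U) (htop : IsTight r x univ)
    (hy : ∀ U, ∑ a ∈ U, y a ≤ r U) (he : x e < y e) :
    ∃ f, y f < x f ∧ (∀ U, e ∈ U → f ∉ U → ∑ a ∈ U, x a < r U) ∧
      ∀ U, f ∈ U → e ∉ U → ∑ a ∈ U, y a < r U := by
  obtain ⟨D, ⟨hD, heD⟩, hDleast⟩ := exists_isLeast_isTight_mem hr hx htop e
  obtain ⟨T, ⟨hT, heT⟩, hTgreatest⟩ := exists_isGreatest_isTight_notMem hr hy hbot e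
  obtain ⟨f, hf, hyx⟩ : ∃ f ∈ D \ T, y f < x f := by
    by_contra! hxy
    exact (hD.sum_sdiff_le hr hx hy hT).not_gt
      (sum_lt_sum hxy ⟨e, mem_sdiff.2 ⟨heD, heT⟩, he⟩)
  obtain ⟨hfD, hfT⟩ := mem_sdiff.1 hf
  exact ⟨f, hyx,
    fun U heU hfU => (hx U).lt_of_ne fun hU => hfU (hDleast ⟨hU, heU⟩ hfD),
    fun U hfU heU => (hy U).lt_of_ne fun hU => hfT (hTgreatest ⟨hU, heU⟩ hfU)⟩

end Tight

section Exchange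

variable {E R : Type*} [DecidableEq E] [Ring R] {e f a : E}

/-- The point `x + α (χ_e - χ_f)`, which moves load `α` from `f` to `e`. -/
def exchange (x : E → R) (α : R) (e f : E) : E → R :=
  fun a => x a + α * ((if a = e then 1 else 0) - (if a = f then 1 else 0))

theorem exchange_left (x : E → R) (α : R) (hef : e ≠ f) : exchange x α e f e = x e + α := by
  simp [exchange, hef]

theorem exchange_right (x : E → R) (α : R) (hef : e ≠ f) : exchange x α e f f = x f - α := by
  simp [exchange, hef.symm, sub_eq_add_neg]

theorem exchange_of_ne (x : E → R) (α : R) (hae : a ≠ e) (haf : a ≠ f) :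
    exchange x α e f a = x a := by
  simp [exchange, hae, haf]

theorem sum_exchange (x : E → R) (α : R) (e f : E) (U : Finset E) :
    ∑ a ∈ U, exchange x α e f a =
      ∑ a ∈ U, x a + α * ((if e ∈ U then 1 else 0) - (if f ∈ U then 1 else 0)) := by
  simp only [exchange, sum_add_distrib, ← mul_sum, sum_sub_distrib, sum_ite_eq']

theorem sum_apply_exchange [Fintype E] {M : Type*} [AddCommGroup M] (G : E → R → M) (x : E → R)
    (α : R) (hef : e ≠ f) :
    ∑ a, G a (exchange x α e f a) =
      ∑ a, G a (x a) + (G e (x e + α) - G e (x e)) + (G f (x f - α) - G f (x f)) := by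
  rw [add_assoc, ← sub_eq_iff_eq_add', ← sum_sub_distrib, Fintype.sum_eq_add e f hef,
    exchange_left x α hef, exchange_right x α hef]
  rintro a ⟨hae, haf⟩
  rw [exchange_of_ne x α hae haf, sub_self]

theorem sum_abs_exchange_sub [Fintype E] [LinearOrder R] [IsStrictOrderedRing R] {x y : E → R}
    {k : R} (hk : 0 ≤ k) (hef : e ≠ f) (he : x e + k ≤ y e) (hf : y f + k ≤ x f) :
    ∑ a, |exchange y k f e a - x a| + 2 * k = ∑ a, |y a - x a| := by
  rw [sum_apply_exchange (fun a t => |t - x a|) y k hef.symm,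
    abs_of_nonpos (show y f + k - x f ≤ 0 by grind),
    abs_of_nonpos (show y f - x f ≤ 0 by grind),
    abs_of_nonneg (show 0 ≤ y e - k - x e by grind),
    abs_of_nonneg (show 0 ≤ y e - x e by grind)]
  grind

theorem exists_nat_exchange_eq_mul {x : E → R} {k : R} (hx : ∀ e, ∃ q : ℕ, x e = k * q)
    (hef : e ≠ f) (hf : x f ≠ 0) (a : E) : ∃ q : ℕ, exchange x k e f a = k * q := by
  obtain ⟨q, hq⟩ := hx a
  by_cases hae : a = e
  · subst hae
    exact ⟨q + 1, by rw [exchange_left x k hef, hq]; push_cast; rw [mul_add_one]⟩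
  by_cases haf : a = f
  · subst haf
    have hq_pos : 1 ≤ q := Nat.one_le_iff_ne_zero.2 fun h => hf (by simp [hq, h])
    exact ⟨q - 1, by rw [exchange_right x k hef, hq]; push_cast [hq_pos]; rw [mul_sub_one]⟩
  · exact ⟨q, by rw [exchange_of_ne x k hae haf, hq]⟩

end Exchange

section Multiples

variable {E R : Type*} [Semiring R] {k : R}

theorem add_le_of_lt_of_multiples [LinearOrder R] [IsStrictOrderedRing R] {a b : R}
    (hk : 0 < k) (ha : ∃ q : ℕ, a = k * q) (hb : ∃ q : ℕ, b = k * q) (hab : a < b) : a + k ≤ b := by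
  obtain ⟨p, rfl⟩ := ha
  obtain ⟨q, rfl⟩ := hb
  have hpq : p + 1 ≤ q := by exact_mod_cast lt_of_mul_lt_mul_left hab hk.le
  calc k * p + k = k * ↑(p + 1) := by push_cast; rw [mul_add_one]
    _ ≤ k * q := mul_le_mul_of_nonneg_left (mod_cast hpq) hk.le

theorem exists_nat_sum_eq_mul {x : E → R} (hx : ∀ e, ∃ q : ℕ, x e = k * q) (U : Finset E) :
    ∃ q : ℕ, ∑ e ∈ U, x e = k * q := by
  choose q hq using hx
  exact ⟨∑ e ∈ U, q e, by simp [hq, mul_sum]⟩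

end Multiples

section Base

variable {E : Type*} [Fintype E] [DecidableEq E] {ρ : Finset E → ℝ} {d k α : ℝ} {x y : E → ℝ}
  {e f : E}

theorem memKBase.exchange_of_forall_lt (hx : memKBase ρ d k x) (hk : 0 < k)
    (hρk : ∀ U, ∃ q : ℕ, ρ U = k * q) (hef : e ≠ f) (hf : x f ≠ 0)
    (hslack : ∀ U, e ∈ U → f ∉ U → ∑ a ∈ U, x a < ρ U) :
    memKBase ρ d k (exchange x k e f) := by
  obtain ⟨⟨-, hle, hsum⟩, hint⟩ := hx
  have hint' := exists_nat_exchange_eq_mul hint hef hf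
  refine ⟨⟨fun a => ?_, fun U => ?_, ?_⟩, hint'⟩
  · obtain ⟨q, hq⟩ := hint' a
    rw [hq]
    positivity
  · rw [sum_exchange]
    by_cases heU : e ∈ U <;> by_cases hfU : f ∈ U
    · simpa [heU, hfU] using hle U
    · simpa [heU, hfU] using
        add_le_of_lt_of_multiples hk (exists_nat_sum_eq_mul hint U) (hρk U) (hslack U heU hfU)
    · simpa [heU, hfU] using (hle U).trans (le_add_of_nonneg_right hk.le)
    · simpa [heU, hfU] using hle U
  · simpa [sum_exchange] using hsum

theorem memKBase.exchange_of_memBase_exchange (hx : memKBase ρ d k x) (hk : 0 < k)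
    (hρk : ∀ U, ∃ q : ℕ, ρ U = k * q) (hef : e ≠ f) (hα : 0 < α)
    (h : memBase ρ d (exchange x α e f)) : memKBase ρ d k (exchange x k e f) := by
  obtain ⟨hnonneg, hle, -⟩ := h
  refine hx.exchange_of_forall_lt hk hρk hef (ne_of_gt ?_) fun U heU hfU => ?_
  · linarith [hnonneg f, exchange_right x α hef]
  · calc ∑ a ∈ U, x a < ∑ a ∈ U, x a + α := lt_add_of_pos_right _ hα
      _ = ∑ a ∈ U, exchange x α e f a := by simp [sum_exchange, heU, hfU]
      _ ≤ ρ U := hle U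

theorem memBase.exists_symmetric_exchange (hρ : IsSubmodular ρ) (hρ_empty : ρ ∅ = 0)
    (hx : memBase ρ d x) (hy : memBase ρ d y) (he : x e < y e) :
    ∃ f, y f < x f ∧ (∀ U, e ∈ U → f ∉ U → ∑ a ∈ U, x a < ρ U) ∧
      ∀ U, f ∈ U → e ∉ U → ∑ a ∈ U, y a < ρ U := by
  -- Lowering `ρ` to `d` at the ground set keeps the same bases and makes the ground set tight.
  have hd : d ≤ ρ univ := hx.2.2 ▸ hx.2.1 univ
  have hlower : Function.update ρ univ d ≤ ρ := update_le_self_iff.2 hd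
  have hle : ∀ z, memBase ρ d z → ∀ U, ∑ a ∈ U, z a ≤ Function.update ρ univ d U := by
    intro z hz U
    rcases eq_or_ne U univ with rfl | hU
    · simp [hz.2.2]
    · simpa [Function.update_of_ne hU] using hz.2.1 U
  have hempty : (∅ : Finset E) ≠ univ := (univ_nonempty_iff.2 ⟨e⟩).ne_empty.symm
  obtain ⟨f, hf, hxU, hyU⟩ := (hρ.update_top hd).exists_symmetric_exchange
    (by rwa [top_eq_univ, Function.update_of_ne hempty]) (hle x hx)
    (by simp [IsTight, hx.2.2]) (hle y hy) he
  exact ⟨f, hf, fun U heU hfU => (hxU U heU hfU).trans_le (hlower U),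
    fun U hfU heU => (hyU U hfU heU).trans_le (hlower U)⟩

theorem memKBase.exists_exchange (hρ : IsSubmodular ρ) (hρ_empty : ρ ∅ = 0) (hk : 0 < k)
    (hρk : ∀ U, ∃ q : ℕ, ρ U = k * q) (hx : memKBase ρ d k x) (hy : memKBase ρ d k y)
    (hxy : x ≠ y) :
    ∃ e f, e ≠ f ∧ x e + k ≤ y e ∧ y f + k ≤ x f ∧
      memKBase ρ d k (exchange x k e f) ∧ memKBase ρ d k (exchange y k f e) := by
  obtain ⟨e, he⟩ : ∃ e, x e < y e := by
    by_contra! hle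
    exact (Fintype.sum_strictMono (lt_of_le_of_ne hle hxy.symm)).ne
      (hy.1.2.2.trans hx.1.2.2.symm)
  obtain ⟨f, hf, hxU, hyU⟩ := hx.1.exists_symmetric_exchange hρ hρ_empty hy.1 he
  have hef : e ≠ f := by
    rintro rfl
    exact lt_asymm he hf
  exact ⟨e, f, hef, add_le_of_lt_of_multiples hk (hx.2 e) (hy.2 e) he,
    add_le_of_lt_of_multiples hk (hy.2 f) (hx.2 f) hf,
    hx.exchange_of_forall_lt hk hρk hef ((hy.1.1 f).trans_lt hf).ne' hxU,
    hy.exchange_of_forall_lt hk hρk hef.symm ((hx.1.1 e).trans_lt he).ne' hyU⟩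

theorem memKBase.exists_nearer_sum_le (hρ : IsSubmodular ρ) (hρ_empty : ρ ∅ = 0) (hk : 0 < k)
    (hρk : ∀ U, ∃ q : ℕ, ρ U = k * q) {G : E → ℝ → ℝ}
    (hG : ∀ e, MonotoneOn (fun t => G e (t + k) - G e t) (Set.Ici 0))
    (hx : memKBase ρ d k x)
    (hlocal : ∀ e f, e ≠ f → memKBase ρ d k (exchange x k e f) →
      G f (x f) - G f (x f - k) ≤ G e (x e + k) - G e (x e))
    (hy : memKBase ρ d k y) (hxy : x ≠ y) :
    ∃ z, memKBase ρ d k z ∧ ∑ a, G a (z a) ≤ ∑ a, G a (y a) ∧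
      ∑ a, |z a - x a| + 2 * k = ∑ a, |y a - x a| := by
  obtain ⟨e, f, hef, he, hf, hx_exchange, hy_exchange⟩ :=
    hx.exists_exchange hρ hρ_empty hk hρk hy hxy
  refine ⟨exchange y k f e, hy_exchange, ?_, sum_abs_exchange_sub hk.le hef he hf⟩
  have hyf : y f ≤ x f - k := le_sub_iff_add_le.2 hf
  have hxe : x e ≤ y e - k := le_sub_iff_add_le.2 he
  have hincr : G f (y f + k) - G f (y f) ≤ G e (y e) - G e (y e - k) :=
    calc G f (y f + k) - G f (y f)
        ≤ G f (x f) - G f (x f - k) := by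
          simpa using hG f (hy.1.1 f) ((hy.1.1 f).trans hyf) hyf
      _ ≤ G e (x e + k) - G e (x e) := hlocal e f hef hx_exchange
      _ ≤ G e (y e) - G e (y e - k) := by
          simpa using hG e (hx.1.1 e) ((hx.1.1 e).trans hxe) hxe
  rw [sum_apply_exchange G y k hef.symm]
  linarith

theorem memKBase.sum_le_of_forall_exchange (hρ : IsSubmodular ρ) (hρ_empty : ρ ∅ = 0) (hk : 0 < k)
    (hρk : ∀ U, ∃ q : ℕ, ρ U = k * q) {G : E → ℝ → ℝ}
    (hG : ∀ e, MonotoneOn (fun t => G e (t + k) - G e t) (Set.Ici 0))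
    (hx : memKBase ρ d k x)
    (hlocal : ∀ e f, e ≠ f → memKBase ρ d k (exchange x k e f) →
      G f (x f) - G f (x f - k) ≤ G e (x e + k) - G e (x e))
    (hy : memKBase ρ d k y) : ∑ a, G a (x a) ≤ ∑ a, G a (y a) := by
  obtain ⟨n, hn⟩ := exists_nat_ge ((∑ a, |y a - x a|) / k)
  rw [div_le_iff₀ hk] at hn
  induction n generalizing y with
  | zero =>
    have hdist : (fun a => |y a - x a|) = 0 :=
      (Fintype.sum_eq_zero_iff_of_nonneg fun a => abs_nonneg _).1
        ((hn.trans_eq (by simp)).antisymm (sum_nonneg fun a _ => abs_nonneg _))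
    have hyx : y = x := funext fun a => sub_eq_zero.1 (abs_eq_zero.1 (congrFun hdist a))
    rw [hyx]
  | succ n ih =>
    rcases eq_or_ne x y with rfl | hxy
    · rfl
    obtain ⟨z, hz, hcost, hdist⟩ := hx.exists_nearer_sum_le hρ hρ_empty hk hρk hG hlocal hy hxy
    push_cast at hn
    exact (ih hz (by linarith)).trans hcost

end Base

theorem stmt_4_general {E : Type*} [Fintype E] [DecidableEq E] {ρ : Finset E → ℝ}
    (hρ : IsSubmodular ρ) (hρ_empty : ρ ∅ = 0) {k : ℝ} (hk : 0 < k)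
    (hρk : ∀ U, ∃ q : ℕ, ρ U = k * q) {G : E → ℝ → ℝ}
    -- `t` may be negative because the pair `(e, e)` with `x e = 0` involves `G e (-k)`.
    (hG : ∀ e t u, t ≤ u → 0 ≤ u → G e (t + k) - G e t ≤ G e (u + k) - G e u)
    {d : ℝ} {x : E → ℝ} (hx : memKBase ρ d k x) :
    (∀ y, memKBase ρ d k y → ∑ e, G e (x e) ≤ ∑ e, G e (y e)) ↔
      ∀ e f, (∃ α > 0, memBase ρ d (exchange x α e f)) →
        G f (x f) - G f (x f - k) ≤ G e (x e + k) - G e (x e) := by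
  constructor
  · rintro hmin e f ⟨α, hα, hmem⟩
    rcases eq_or_ne e f with rfl | hef
    · simpa using hG e (x e - k) (x e) (by linarith) (hx.1.1 e)
    · have hle := hmin _ (hx.exchange_of_memBase_exchange hk hρk hef hα hmem)
      rw [sum_apply_exchange G x k hef] at hle
      linarith
  · intro hlocal y hy
    exact hx.sum_le_of_forall_exchange hρ hρ_empty hk hρk
      (fun e t _ u hu htu => hG e t u htu hu)
      (fun e f _ hmem => hlocal e f ⟨k, hk, hmem.1⟩) hy

/-- Lemma 1 of the paper: a `k`-integral point `x` minimizes the player cost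
`f(y) = Σ_e c_e(s_e + y_e)·y_e` over `P^k_ρ(d)` iff for every pair `(e,f)` for
which a positive fractional exchange is feasible, the cost of adding a packet
to `e` is at least the gain of removing a packet from `f`. -/
theorem stmt_4 {E : Type*} [Fintype E] [DecidableEq E]
    (ρ : Finset E → ℝ) (hρ : IsRank ρ)
    (k : ℝ) (hk : 0 < k) (hρk : ∀ U, ∃ q : ℕ, ρ U = k * q)
    (d : ℝ) (hd : 0 < d) (hdk : ∃ q : ℕ, d = k * q) (hdρ : d ≤ ρ Finset.univ)
    (s : E → ℝ) (hs : ∀ e, 0 ≤ s e)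
    (c : E → ℝ → ℝ)
    (hcnonneg : ∀ e t, 0 ≤ c e t) (hcmono : ∀ e, Monotone (c e))
    (hcdiff : ∀ e, Differentiable ℝ (c e)) (hcconv : ∀ e, ConvexOn ℝ Set.univ (c e))
    (x : E → ℝ) (hx : memKBase ρ d k x) :
    (∀ y, memKBase ρ d k y →
        ∑ e, c e (s e + x e) * x e ≤ ∑ e, c e (s e + y e) * y e) ↔
      (∀ e f : E,
        (∃ α > 0, memBase ρ d
          (fun e' => x e' + α * ((if e' = e then 1 else 0) - (if e' = f then 1 else 0)))) →
        (x e + k) * c e (s e + x e + k) - x e * c e (s e + x e) ≥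
          x f * c f (s f + x f) - (x f - k) * c f (s f + x f - k)) := by
  have criterion := stmt_4_general (G := fun e t => c e (s e + t) * t) hρ.1 hρ.2.2 hk hρk
    (fun e _ _ => increment_add_mul_self_le (hcconv e) (hcmono e) (s e) hk) hx
  simp only [mul_comm, add_assoc, add_sub_assoc] at criterion ⊢
  exact criterion
end

section
/- Let E be a finite set, ρ a rank function on E, k > 0 with ρ(U)/k ∈ ℕ for all U ⊆ E, and d > 0 with d/k ∈ ℕ and d ≤ ρ(E). Let x ∈ P^k_ρ(d), let e, f ∈ E with e ≠ f, and suppose there exists α > 0 such that x + α(χ_e − χ_f) ∈ P_ρ(d). Then x + k⌈α/k⌉(χ_e − χ_f) ∈ P^k_ρ(d). -/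
/-!
Moving `x` by `c` along `χ_e - χ_f` changes the left-hand side of each constraint, written in the
form `a ≤ b`, by `c`, `0` or `-c`. Where it changes by `c`, the slack `b - a` is a multiple of `k`,
so `α ≤ b - a` forces `k * ⌈α / k⌉ ≤ b - a`; elsewhere, since `α ≤ k * ⌈α / k⌉`, replacing `α` by
its rounding only helps.
-/

open AddSubgroup (zmultiples)

section Rounding

theorem mul_intCast_mem_zmultiples {R : Type*} [Ring R] (k : R) (z : ℤ) :
    k * z ∈ zmultiples k :=
  z.cast_comm k ▸ AddSubgroup.intCast_mul_mem_zmultiples k z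

theorem mem_zmultiples_of_exists_eq_mul_natCast {R : Type*} [Ring R] {k a : R}
    (h : ∃ q : ℕ, a = k * q) : a ∈ zmultiples k := by
  obtain ⟨q, rfl⟩ := h
  exact_mod_cast mul_intCast_mem_zmultiples k q

theorem exists_eq_mul_natCast_of_mem_zmultiples {R : Type*} [Ring R] [LinearOrder R]
    [IsStrictOrderedRing R] {k a : R} (hk : 0 < k) (ha : a ∈ zmultiples k) (ha₀ : 0 ≤ a) :
    ∃ q : ℕ, a = k * q := by
  obtain ⟨z, rfl⟩ := AddSubgroup.mem_zmultiples_iff.1 ha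
  rw [zsmul_eq_mul] at ha₀
  lift z to ℕ using Int.cast_nonneg_iff.1 (nonneg_of_mul_nonneg_left ha₀ hk)
  exact ⟨z, by rw [natCast_zsmul, nsmul_eq_mul, Nat.cast_comm]⟩

variable {K : Type*} [Field K] [LinearOrder K] [IsStrictOrderedRing K] [FloorRing K]
  {k a b α ε : K}

theorem mul_ceil_div_le_iff (hk : 0 < k) (hb : b ∈ zmultiples k) :
    k * ⌈α / k⌉ ≤ b ↔ α ≤ b := by
  obtain ⟨z, rfl⟩ := AddSubgroup.mem_zmultiples_iff.1 hb
  rw [zsmul_eq_mul, mul_comm k, mul_le_mul_iff_left₀ hk, Int.cast_le, Int.ceil_le, div_le_iff₀ hk]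

theorem le_mul_ceil_div (hk : 0 < k) : α ≤ k * ⌈α / k⌉ :=
  (mul_ceil_div_le_iff hk (mul_intCast_mem_zmultiples k _)).1 le_rfl

theorem add_mul_ceil_div_mul_le (hk : 0 < k) (ha : a ∈ zmultiples k) (hb : b ∈ zmultiples k)
    (hε : ε ≤ 0 ∨ ε = 1) (h : a + α * ε ≤ b) : a + k * ⌈α / k⌉ * ε ≤ b := by
  rcases hε with hε | rfl
  · have hmono : k * ⌈α / k⌉ * ε ≤ α * ε := mul_le_mul_of_nonpos_right (le_mul_ceil_div hk) hε
    linarith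
  · have hslack : k * ⌈α / k⌉ ≤ b - a :=
      (mul_ceil_div_le_iff hk (sub_mem hb ha)).2 (by linarith)
    linarith

end Rounding

section Exchange

theorem sum_add_smul_apply {ι R : Type*} [NonUnitalNonAssocSemiring R] (x v : ι → R) (c : R)
    (U : Finset ι) : ∑ i ∈ U, (x + c • v) i = ∑ i ∈ U, x i + c * ∑ i ∈ U, v i := by
  simp [Finset.sum_add_distrib, Finset.mul_sum]

variable {E : Type*} [DecidableEq E]

/-- The direction `χ_e - χ_f` of an exchange that moves load from `f` to `e`. It is written with
`if`s, not with `Pi.single`, so that it unfolds to the expression in `stmt_5`. -/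
def exchangeDirection (e f : E) : E → ℝ :=
  fun g => (if g = e then 1 else 0) - (if g = f then 1 else 0)

theorem exchangeDirection_swap (e f g : E) :
    exchangeDirection f e g = -exchangeDirection e f g :=
  (neg_sub _ _).symm

theorem sum_exchangeDirection (e f : E) (U : Finset E) :
    ∑ g ∈ U, exchangeDirection e f g = (if e ∈ U then 1 else 0) - (if f ∈ U then 1 else 0) := by
  simp [exchangeDirection]

theorem sum_exchangeDirection_nonpos_or_eq_one (e f : E) (U : Finset E) :
    ∑ g ∈ U, exchangeDirection e f g ≤ 0 ∨ ∑ g ∈ U, exchangeDirection e f g = 1 := by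
  rw [sum_exchangeDirection]
  split_ifs <;> norm_num

theorem exchangeDirection_nonpos_or_eq_one (e f g : E) :
    exchangeDirection e f g ≤ 0 ∨ exchangeDirection e f g = 1 := by
  simpa using sum_exchangeDirection_nonpos_or_eq_one e f {g}

theorem mul_exchangeDirection_mem {S : AddSubgroup ℝ} {c : ℝ} (hc : c ∈ S) (e f g : E) :
    c * exchangeDirection e f g ∈ S := by
  unfold exchangeDirection
  split_ifs <;> simp [hc]

end Exchange

section BasePolytope

variable {E : Type*} [Fintype E] [DecidableEq E] {ρ : Finset E → ℝ} {k d α : ℝ} {x : E → ℝ}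

theorem memBase.memKBase (hx : memBase ρ d x) (hk : 0 < k) (hxk : ∀ g, x g ∈ zmultiples k) :
    memKBase ρ d k x :=
  ⟨hx, fun g => exists_eq_mul_natCast_of_mem_zmultiples hk (hxk g) (hx.1 g)⟩

theorem memBase.mul_ceil_div_exchange {e f : E}
    (h : memBase ρ d (x + α • exchangeDirection e f)) (hk : 0 < k)
    (hρk : ∀ U, ρ U ∈ zmultiples k) (hxk : ∀ g, x g ∈ zmultiples k) :
    memBase ρ d (x + (k * ⌈α / k⌉) • exchangeDirection e f) := by
  obtain ⟨hnonneg, hload, htotal⟩ := h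
  refine ⟨fun g => ?_, fun U => ?_, ?_⟩
  · have hshift : 0 ≤ x g + α * exchangeDirection e f g := hnonneg g
    have hround : -x g + k * ⌈α / k⌉ * exchangeDirection f e g ≤ 0 :=
      add_mul_ceil_div_mul_le hk (neg_mem (hxk g)) (zero_mem _)
        (exchangeDirection_nonpos_or_eq_one f e g) (by rw [exchangeDirection_swap]; linarith)
    rw [exchangeDirection_swap] at hround
    change 0 ≤ x g + k * ⌈α / k⌉ * exchangeDirection e f g
    linarith
  · have hshift := hload U
    rw [sum_add_smul_apply] at hshift ⊢
    exact add_mul_ceil_div_mul_le hk (sum_mem fun g _ => hxk g) (hρk U)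
      (sum_exchangeDirection_nonpos_or_eq_one e f U) hshift
  · rw [← htotal, sum_add_smul_apply, sum_add_smul_apply, sum_exchangeDirection]
    simp

theorem stmt_5_general (hk : 0 < k) (hρk : ∀ U, ρ U ∈ zmultiples k)
    (hxk : ∀ g, x g ∈ zmultiples k) {e f : E}
    (hfeas : memBase ρ d (x + α • exchangeDirection e f)) :
    memKBase ρ d k (x + (k * ⌈α / k⌉) • exchangeDirection e f) :=
  (hfeas.mul_ceil_div_exchange hk hρk hxk).memKBase hk fun g =>
    add_mem (hxk g) (mul_exchangeDirection_mem (mul_intCast_mem_zmultiples k _) e f g)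

end BasePolytope

/-- The rounding step in the proof of Lemma 1 of the paper: if all rank values
and the demand are integer multiples of `k`, a feasible fractional exchange
`x + α(χ_e − χ_f)` between two resources can be rounded up to the feasible
`k`-integral exchange `x + k⌈α/k⌉(χ_e − χ_f)`. -/
theorem stmt_5 {E : Type*} [Fintype E] [DecidableEq E]
    (ρ : Finset E → ℝ) (hρ : IsRank ρ)
    (k : ℝ) (hk : 0 < k) (hρk : ∀ U, ∃ q : ℕ, ρ U = k * q)
    (d : ℝ) (hd : 0 < d) (hdk : ∃ q : ℕ, d = k * q) (hdρ : d ≤ ρ Finset.univ)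
    (x : E → ℝ) (hx : memKBase ρ d k x)
    (e f : E) (hef : e ≠ f)
    (α : ℝ) (hα : 0 < α)
    (hfeas : memBase ρ d
      (fun e' => x e' + α * ((if e' = e then 1 else 0) - (if e' = f then 1 else 0)))) :
    memKBase ρ d k
      (fun e' => x e' +
        (k * (⌈α / k⌉ : ℤ)) * ((if e' = e then 1 else 0) - (if e' = f then 1 else 0))) :=
  stmt_5_general hk (fun U => mem_zmultiples_of_exists_eq_mul_natCast (hρk U))
    (fun g => mem_zmultiples_of_exists_eq_mul_natCast (hx.2 g)) hfeas
end

section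
/- Let E be a finite set, ρ a rank function on E, d > 0, and let x, y ∈ P_ρ(d). Set E⁻ = {e ∈ E : x_e > y_e} and E⁺ = {e ∈ E : y_e > x_e}. Then there exists t : E⁻ × E⁺ → ℝ_{≥0} such that Σ_{f∈E⁺} t_{e,f} = x_e − y_e for every e ∈ E⁻, Σ_{e∈E⁻} t_{e,f} = y_f − x_f for every f ∈ E⁺, and x + t_{e,f}·(χ_f − χ_e) ∈ P_ρ(d) for every (e,f) ∈ E⁻ × E⁺. -/
/-!
By Gale's supply-demand theorem it is enough to bound, for all sets `A` of sources and `F` of sinks,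
the demand of `F` by the supply outside `A` plus the capacity from `A` to `F`. The capacity of a
pair `(e, f)` is the least slack `ρ U - x(U)` over the sets `U` containing `f` but not `e`. Slack is
submodular and nonnegative, so the minimizing sets for the pairs in `A × F` uncross to one set
`W ⊇ F` disjoint from `A`, whose slack is at most the total capacity from `A` to `F`; and
`y(W) - x(W) ≤ ρ W - x(W)` because `y` lies in the polytope.

Gale's theorem is proved by least squares: among all flows within the capacities, one that minimizes
the squared distance between its marginals and the prescribed ones already exhibits a violated cut
unless that distance is zero.
-/

open Finset
open scoped RealInnerProductSpace

lemma exists_forall_inner_sub_map_nonpos {V H : Type*} [AddCommGroup V] [Module ℝ V]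
    [TopologicalSpace V] [NormedAddCommGroup H] [InnerProductSpace ℝ H] (L : V →ₗ[ℝ] H)
    (hL : Continuous L) {K : Set V} (hne : K.Nonempty) (hcompact : IsCompact K)
    (hconvex : Convex ℝ K) (u : H) :
    ∃ t ∈ K, ∀ s ∈ K, ⟪u - L t, L (s - t)⟫ ≤ 0 := by
  have himage : Convex ℝ (L '' K) := hconvex.linear_image L
  obtain ⟨_, ⟨t, ht, rfl⟩, hproj⟩ := exists_norm_eq_iInf_of_complete_convex (hne.image L)
    (hcompact.image hL).isComplete himage u
  rw [norm_eq_iInf_iff_real_inner_le_zero himage ⟨t, ht, rfl⟩] at hproj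
  exact ⟨t, ht, fun s hs => map_sub L s t ▸ hproj _ ⟨s, hs, rfl⟩⟩

section Transport

variable {ι κ : Type*} [Fintype ι] [Fintype κ]

/-- The row and column sums of a matrix, as a linear map. The target carries the Euclidean norm so
that prescribed marginals can be approximated by orthogonal projection. -/
noncomputable def marginals : (ι → κ → ℝ) →ₗ[ℝ] EuclideanSpace ℝ (ι ⊕ κ) where
  toFun t := WithLp.toLp 2 (Sum.elim (fun i => ∑ j, t i j) (fun j => ∑ i, t i j))
  map_add' s t := by ext (i | j) <;> simp [sum_add_distrib]
  map_smul' r t := by ext (i | j) <;> simp [mul_sum]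

lemma marginals_inl (t : ι → κ → ℝ) (i : ι) : marginals t (Sum.inl i) = ∑ j, t i j := rfl

lemma marginals_inr (t : ι → κ → ℝ) (j : κ) : marginals t (Sum.inr j) = ∑ i, t i j := rfl

lemma inner_marginals (u : EuclideanSpace ℝ (ι ⊕ κ)) (t : ι → κ → ℝ) :
    ⟪u, marginals t⟫ = ∑ i, ∑ j, t i j * (u (Sum.inl i) + u (Sum.inr j)) := by
  simp only [PiLp.inner_apply, Fintype.sum_sum_type, marginals_inl, marginals_inr,
    RCLike.inner_apply, conj_trivial, mul_add, sum_add_distrib, sum_mul]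
  rw [sum_comm (f := fun i j => t i j * u (Sum.inr j))]

/-- Complementary slackness for the least-squares flow; `u i` and `v j` are its defects. -/
lemma exists_complementary_defects (a : ι → ℝ) (b : κ → ℝ) {c : ι → κ → ℝ} (hc : 0 ≤ c) :
    ∃ t ∈ Set.Icc 0 c, ∃ (u : ι → ℝ) (v : κ → ℝ),
      (∀ i, ∑ j, t i j = a i - u i) ∧ (∀ j, ∑ i, t i j = b j - v j) ∧
      (∀ i j, 0 < u i + v j → t i j = c i j) ∧ (∀ i j, u i + v j < 0 → t i j = 0) := by
  obtain ⟨t, ht, hopt⟩ := exists_forall_inner_sub_map_nonpos marginals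
    marginals.continuous_of_finiteDimensional (Set.nonempty_Icc.2 hc) isCompact_Icc
    (convex_Icc 0 c) (WithLp.toLp 2 (Sum.elim a b))
  simp only [inner_marginals, PiLp.sub_apply, marginals_inl, marginals_inr, Sum.elim_inl,
    Sum.elim_inr, Pi.sub_apply] at hopt
  set u : ι → ℝ := fun i => a i - ∑ j, t i j
  set v : κ → ℝ := fun j => b j - ∑ i, t i j
  let s : ι → κ → ℝ := fun i j => if 0 < u i + v j then c i j else 0
  have hs : s ∈ Set.Icc 0 c := by
    constructor <;> intro i j <;> dsimp only [s] <;> split_ifs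
    exacts [hc i j, le_rfl, le_rfl, hc i j]
  have hterm : ∀ i j, 0 ≤ (s i j - t i j) * (u i + v j) := by
    intro i j
    dsimp only [s]
    split_ifs with h
    · exact mul_nonneg (sub_nonneg.2 (ht.2 i j)) h.le
    · exact mul_nonneg_of_nonpos_of_nonpos (by simpa using ht.1 i j) (not_lt.1 h)
  have htotal : ∑ p : ι × κ, (s p.1 p.2 - t p.1 p.2) * (u p.1 + v p.2) = 0 :=
    le_antisymm (Fintype.sum_prod_type _ |>.trans_le (hopt s hs))
      (sum_nonneg fun p _ => hterm p.1 p.2)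
  have hzero : ∀ i j, (s i j - t i j) * (u i + v j) = 0 := fun i j =>
    (sum_eq_zero_iff_of_nonneg fun p _ => hterm p.1 p.2).1 htotal (i, j) (mem_univ _)
  have hts : ∀ i j, u i + v j ≠ 0 → t i j = s i j := fun i j h =>
    (sub_eq_zero.1 ((mul_eq_zero.1 (hzero i j)).resolve_right h)).symm
  exact ⟨t, ht, u, v, fun i => (sub_sub_cancel _ _).symm, fun j => (sub_sub_cancel _ _).symm,
    fun i j h => (hts i j h.ne').trans (if_pos h),
    fun i j h => (hts i j h.ne).trans (if_neg h.not_gt)⟩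

lemma sum_defect_le_of_cut [DecidableEq ι] {a u : ι → ℝ} {b v : κ → ℝ} {c t : ι → κ → ℝ}
    {A : Finset ι} {F : Finset κ}
    (hrow : ∀ i, ∑ j, t i j = a i - u i) (hcol : ∀ j, ∑ i, t i j = b j - v j)
    (hfull : ∀ i ∈ A, ∀ j ∈ F, t i j = c i j) (hzero : ∀ i ∉ A, ∀ j ∉ F, t i j = 0)
    (hcut : ∑ j ∈ F, b j ≤ ∑ i ∈ Aᶜ, a i + ∑ i ∈ A, ∑ j ∈ F, c i j) :
    ∑ j ∈ F, v j ≤ ∑ i ∈ Aᶜ, u i := by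
  have hA : ∑ i ∈ A, ∑ j ∈ F, t i j = ∑ i ∈ A, ∑ j ∈ F, c i j :=
    sum_congr rfl fun i hi => sum_congr rfl (hfull i hi)
  have hAc : ∑ i ∈ Aᶜ, ∑ j ∈ F, t i j = ∑ i ∈ Aᶜ, (a i - u i) :=
    sum_congr rfl fun i hi => (sum_subset (subset_univ F) fun j _ =>
      hzero i (mem_compl.1 hi) j).trans (hrow i)
  have hF : ∑ i ∈ A, ∑ j ∈ F, t i j + ∑ i ∈ Aᶜ, ∑ j ∈ F, t i j = ∑ j ∈ F, (b j - v j) := by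
    rw [sum_add_sum_compl, sum_comm, sum_congr rfl fun j _ => hcol j]
  simp only [sum_sub_distrib] at hAc hF
  linarith

theorem exists_transport_of_cut [DecidableEq ι] {a : ι → ℝ} {b : κ → ℝ} {c : ι → κ → ℝ}
    (hc : 0 ≤ c) (hab : ∑ i, a i = ∑ j, b j)
    (hcut : ∀ (A : Finset ι) (F : Finset κ),
      ∑ j ∈ F, b j ≤ ∑ i ∈ Aᶜ, a i + ∑ i ∈ A, ∑ j ∈ F, c i j) :
    ∃ t ∈ Set.Icc 0 c, (∀ i, ∑ j, t i j = a i) ∧ (∀ j, ∑ i, t i j = b j) := by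
  obtain ⟨t, ht, u, v, hrow, hcol, hfull, hzero⟩ := exists_complementary_defects a b hc
  -- The cut given by the signs of the defects already forces `0 ≤ u` and `v ≤ 0`.
  have hle : ∑ j with 0 ≤ v j, v j ≤ ∑ i ∈ (univ.filter fun i => 0 < u i)ᶜ, u i := by
    refine sum_defect_le_of_cut hrow hcol (fun i hi j hj => hfull i j ?_)
      (fun i hi j hj => hzero i j ?_) (hcut _ _) <;>
    · simp only [mem_filter_univ, not_lt, not_le] at hi hj
      linarith
  have huneg : ∀ i ∈ (univ.filter fun i => 0 < u i)ᶜ, u i ≤ 0 := by simp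
  have hvpos : ∀ j ∈ univ.filter fun j => 0 ≤ v j, 0 ≤ v j := by simp
  have hu : ∀ i, 0 ≤ u i := by
    intro i
    by_contra! hi
    exact absurd ((sum_nonneg hvpos).trans hle)
      (sum_neg' huneg ⟨i, by simpa using hi.le, hi⟩).not_ge
  have hv : ∀ j, v j ≤ 0 := by
    intro j
    by_contra! hj
    exact absurd (hle.trans (sum_nonpos huneg))
      (sum_pos' hvpos ⟨j, by simpa using hj.le, hj⟩).not_ge
  have huv : ∑ i, u i = ∑ j, v j := by
    have h := sum_comm (s := univ) (t := univ) (f := t)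
    simp only [hrow, hcol, sum_sub_distrib] at h
    linarith
  have hu_sum : ∑ i, u i = 0 :=
    le_antisymm (huv ▸ sum_nonpos fun j _ => hv j) (sum_nonneg fun i _ => hu i)
  have hu_zero := (sum_eq_zero_iff_of_nonneg fun i _ => hu i).1 hu_sum
  have hv_zero := (sum_eq_zero_iff_of_nonpos fun j _ => hv j).1 (huv ▸ hu_sum)
  exact ⟨t, ht, fun i => by simp [hrow, hu_zero], fun j => by simp [hcol, hv_zero]⟩

lemma sum_filter_pos_of_sum_eq {M : Type*} [AddCommMonoid M] [LinearOrder M]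
    [IsOrderedAddMonoid M] {t : ι → κ → M} {b : κ → M} (ht : 0 ≤ t)
    (hcol : ∀ j, ∑ i, t i j = b j) (i : ι) : ∑ j with 0 < b j, t i j = ∑ j, t i j := by
  refine sum_filter_of_ne fun j _ hne => ((ht i j).lt_of_ne' hne).trans_le ?_
  exact hcol j ▸ single_le_sum (f := (t · j)) (fun k _ => ht k j) (mem_univ i)

end Transport

section Uncrossing

variable {ι α E M : Type*} [AddCommMonoid M] [Preorder M] [AddLeftMono M]

lemma apply_sup'_le_sum [SemilatticeSup α] {g : α → M} (hg : ∀ a b, g (a ⊔ b) ≤ g a + g b)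
    {s : Finset ι} (hs : s.Nonempty) (u : ι → α) : g (s.sup' hs u) ≤ ∑ i ∈ s, g (u i) := by
  induction hs using Finset.Nonempty.cons_induction with
  | singleton i => simp
  | cons i s hi hs ih =>
    rw [sup'_cons hs, sum_cons]
    exact (hg _ _).trans (by gcongr)

lemma apply_inf'_le_sum [SemilatticeInf α] {g : α → M} (hg : ∀ a b, g (a ⊓ b) ≤ g a + g b)
    {s : Finset ι} (hs : s.Nonempty) (u : ι → α) : g (s.inf' hs u) ≤ ∑ i ∈ s, g (u i) :=
  apply_sup'_le_sum (α := αᵒᵈ) hg hs u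

lemma exists_separating_le_sum [DecidableEq E] {g : Finset E → M}
    (hsub : ∀ U V, g (U ∪ V) + g (U ∩ V) ≤ g U + g V) (hg : ∀ U, 0 ≤ g U)
    {A F : Finset E} (hA : A.Nonempty) (hF : F.Nonempty) {S : E → E → Finset E}
    (hS : ∀ e ∈ A, ∀ f ∈ F, f ∈ S e f ∧ e ∉ S e f) :
    ∃ W, F ⊆ W ∧ Disjoint A W ∧ g W ≤ ∑ e ∈ A, ∑ f ∈ F, g (S e f) := by
  have hunion : ∀ U V, g (U ⊔ V) ≤ g U + g V := fun U V =>
    (le_add_of_nonneg_right (hg _)).trans (hsub U V)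
  have hinter : ∀ U V, g (U ⊓ V) ≤ g U + g V := fun U V =>
    (le_add_of_nonneg_left (hg _)).trans (hsub U V)
  refine ⟨F.sup' hF fun f => A.inf' hA fun e => S e f, fun f hf => ?_, ?_, ?_⟩
  · have hfS : {f} ≤ A.inf' hA fun e => S e f :=
      le_inf' _ _ fun e he => singleton_subset_iff.2 (hS e he f hf).1
    exact singleton_subset_iff.1 (hfS.trans (le_sup' (fun f => A.inf' hA fun e => S e f) hf))
  · rw [sup'_eq_sup, Finset.disjoint_sup_right]
    refine fun f hf => disjoint_left.2 fun e he hmem => (hS e he f hf).2 ?_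
    exact inf'_le (fun e => S e f) he hmem
  · rw [sum_comm]
    exact (apply_sup'_le_sum hunion hF _).trans
      (sum_le_sum fun f _ => apply_inf'_le_sum hinter hA _)

end Uncrossing

section ExchangeCapacity

variable {E : Type*} {g : Finset E → ℝ}

/-- The least value of `g` on a set containing `f` but not `e`. For the slack `U ↦ ρ U - x(U)`, this
bounds how much can be moved from `e` to `f` without violating `ρ`. There is no such set if `e = f`,
and the infimum is then `0`. -/
noncomputable def exchangeCapacity (g : Finset E → ℝ) (e f : E) : ℝ :=
  ⨅ U : {U : Finset E // f ∈ U ∧ e ∉ U}, g U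

lemma exchangeCapacity_nonneg (hg : ∀ U, 0 ≤ g U) (e f : E) : 0 ≤ exchangeCapacity g e f :=
  Real.iInf_nonneg fun U => hg U

variable [Finite E]

lemma exchangeCapacity_le (g : Finset E → ℝ) {e f : E} {U : Finset E} (hf : f ∈ U) (he : e ∉ U) :
    exchangeCapacity g e f ≤ g U :=
  ciInf_le (Set.finite_range _).bddBelow (⟨U, hf, he⟩ : {U : Finset E // f ∈ U ∧ e ∉ U})

lemma exists_eq_exchangeCapacity (g : Finset E → ℝ) {e f : E} (hef : e ≠ f) :
    ∃ U, (f ∈ U ∧ e ∉ U) ∧ g U = exchangeCapacity g e f := by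
  have : Nonempty {U : Finset E // f ∈ U ∧ e ∉ U} := ⟨{f}, by simpa using hef⟩
  obtain ⟨U, hU⟩ := exists_eq_ciInf_of_finite (f := fun U : {U : Finset E // f ∈ U ∧ e ∉ U} => g U)
  exact ⟨U, U.2, hU⟩

lemma exists_separating_le_sum_exchangeCapacity [DecidableEq E]
    (hsub : ∀ U V, g (U ∪ V) + g (U ∩ V) ≤ g U + g V) (hg : ∀ U, 0 ≤ g U)
    {A F : Finset E} (hA : A.Nonempty) (hF : F.Nonempty) (hAF : Disjoint A F) :
    ∃ W, F ⊆ W ∧ Disjoint A W ∧ g W ≤ ∑ e ∈ A, ∑ f ∈ F, exchangeCapacity g e f := by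
  have hmin : ∀ e ∈ A, ∀ f ∈ F, ∃ U, (f ∈ U ∧ e ∉ U) ∧ g U = exchangeCapacity g e f :=
    fun e he f hf => exists_eq_exchangeCapacity g (disjoint_iff_ne.1 hAF e he f hf)
  choose! S hS using hmin
  obtain ⟨W, hFW, hAW, hW⟩ := exists_separating_le_sum hsub hg hA hF
    fun e he f hf => (hS e he f hf).1
  exact ⟨W, hFW, hAW, hW.trans_eq <|
    sum_congr rfl fun e he => sum_congr rfl fun f hf => (hS e he f hf).2⟩

end ExchangeCapacity

section Transshipment

variable {E : Type*} [Fintype E] [DecidableEq E]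

lemma sum_posPart_le_of_separating {M : Type*} [AddCommGroup M] [LinearOrder M]
    [IsOrderedAddMonoid M] {z : E → M} {A F W : Finset E} (hF : ∀ e ∈ F, 0 < z e → e ∈ W)
    (hA : ∀ e ∈ A, z e < 0 → e ∉ W) :
    ∑ e ∈ F, (z e)⁺ ≤ ∑ e ∈ Aᶜ, (z e)⁻ + ∑ e ∈ W, z e := by
  rw [← sum_ite_mem_eq F, ← sum_ite_mem_eq Aᶜ, ← sum_ite_mem_eq W, ← sum_add_distrib]
  refine sum_le_sum fun e _ => ?_
  rcases lt_or_ge 0 (z e) with hz | hz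
  · rw [posPart_of_nonneg hz.le, negPart_of_nonneg hz.le, ite_self, zero_add]
    by_cases heF : e ∈ F
    · rw [if_pos heF, if_pos (hF e heF hz)]
    · rw [if_neg heF]
      split_ifs <;> simp [hz.le]
  · rw [posPart_of_nonpos hz, negPart_of_nonpos hz, ite_self]
    by_cases heA : e ∈ A
    · rcases hz.eq_or_lt with hz | hz
      · simp [hz]
      · simp [heA, hA e heA hz]
    · rw [if_pos (mem_compl.2 heA)]
      split_ifs <;> simp [hz]

variable {g : Finset E → ℝ} {z : E → ℝ}

lemma exists_separating_sum_le_sum_exchangeCapacity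
    (hsub : ∀ U V, g (U ∪ V) + g (U ∩ V) ≤ g U + g V) (hg : ∀ U, 0 ≤ g U)
    (hzg : ∀ U, ∑ e ∈ U, z e ≤ g U) (hz : ∑ e, z e = 0) {A F : Finset E} (hAF : Disjoint A F) :
    ∃ W, F ⊆ W ∧ Disjoint A W ∧
      ∑ e ∈ W, z e ≤ ∑ e ∈ A, ∑ f ∈ F, exchangeCapacity g e f := by
  obtain rfl | hA := A.eq_empty_or_nonempty
  · exact ⟨univ, subset_univ F, disjoint_empty_left _, by simp [hz]⟩
  obtain rfl | hF := F.eq_empty_or_nonempty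
  · exact ⟨∅, subset_rfl, disjoint_empty_right _, by simp⟩
  obtain ⟨W, hFW, hAW, hW⟩ := exists_separating_le_sum_exchangeCapacity hsub hg hA hF hAF
  exact ⟨W, hFW, hAW, (hzg W).trans hW⟩

lemma sum_posPart_le_add_sum_exchangeCapacity
    (hsub : ∀ U V, g (U ∪ V) + g (U ∩ V) ≤ g U + g V) (hg : ∀ U, 0 ≤ g U)
    (hzg : ∀ U, ∑ e ∈ U, z e ≤ g U) (hz : ∑ e, z e = 0) (A F : Finset E) :
    ∑ f ∈ F, (z f)⁺ ≤ ∑ e ∈ Aᶜ, (z e)⁻ + ∑ e ∈ A, ∑ f ∈ F, exchangeCapacity g e f := by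
  have hdisj : Disjoint (A.filter fun e => z e < 0) (F.filter fun f => 0 < z f) :=
    disjoint_left.2 fun e he hf => lt_asymm (mem_filter.1 he).2 (mem_filter.1 hf).2
  obtain ⟨W, hFW, hAW, hW⟩ :=
    exists_separating_sum_le_sum_exchangeCapacity hsub hg hzg hz hdisj
  have hcap : ∑ e ∈ A with z e < 0, ∑ f ∈ F with 0 < z f, exchangeCapacity g e f ≤
      ∑ e ∈ A, ∑ f ∈ F, exchangeCapacity g e f := by
    simp only [← sum_product']
    exact sum_le_sum_of_subset_of_nonneg
      (product_subset_product (filter_subset _ A) (filter_subset _ F))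
      fun p _ _ => exchangeCapacity_nonneg hg p.1 p.2
  calc ∑ f ∈ F, (z f)⁺ ≤ ∑ e ∈ Aᶜ, (z e)⁻ + ∑ e ∈ W, z e :=
        sum_posPart_le_of_separating (fun f hf h => hFW (mem_filter.2 ⟨hf, h⟩))
          fun e he h => disjoint_left.1 hAW (mem_filter.2 ⟨he, h⟩)
    _ ≤ _ := by gcongr; exact hW.trans hcap

theorem exists_transport_le_exchangeCapacity
    (hsub : ∀ U V, g (U ∪ V) + g (U ∩ V) ≤ g U + g V) (hg : ∀ U, 0 ≤ g U)
    (hzg : ∀ U, ∑ e ∈ U, z e ≤ g U) (hz : ∑ e, z e = 0) :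
    ∃ t ∈ Set.Icc 0 (exchangeCapacity g),
      (∀ e, ∑ f, t e f = (z e)⁻) ∧ (∀ f, ∑ e, t e f = (z f)⁺) := by
  refine exists_transport_of_cut (exchangeCapacity_nonneg hg) ?_
    (sum_posPart_le_add_sum_exchangeCapacity hsub hg hzg hz)
  rw [eq_comm, ← sub_eq_zero, ← sum_sub_distrib]
  simpa only [posPart_sub_negPart] using hz

theorem exists_transshipment_le_exchangeCapacity
    (hsub : ∀ U V, g (U ∪ V) + g (U ∩ V) ≤ g U + g V) (hg : ∀ U, 0 ≤ g U)
    (hzg : ∀ U, ∑ e ∈ U, z e ≤ g U) (hz : ∑ e, z e = 0) :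
    ∃ t ∈ Set.Icc 0 (exchangeCapacity g),
      (∀ e, z e < 0 → ∑ f with 0 < z f, t e f = -z e) ∧
      (∀ f, 0 < z f → ∑ e with z e < 0, t e f = z f) := by
  obtain ⟨t, ht, hrow, hcol⟩ := exists_transport_le_exchangeCapacity hsub hg hzg hz
  refine ⟨t, ht, fun e he => ?_, fun f hf => ?_⟩
  · have hsinks := sum_filter_pos_of_sum_eq ht.1 hcol e
    simp only [posPart_pos_iff] at hsinks
    rw [hsinks, hrow, negPart_of_nonpos he.le]
  · have hsources := sum_filter_pos_of_sum_eq (t := fun f e => t e f) (fun f e => ht.1 e f) hrow f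
    simp only [negPart_pos_iff] at hsources
    rw [hsources, hcol, posPart_of_nonneg hf.le]

variable {ρ : Finset E → ℝ} {d : ℝ} {x : E → ℝ}

lemma memBase_exchange (hx : memBase ρ d x) {e f : E} {r : ℝ} (hr : 0 ≤ r) (hre : r ≤ x e)
    (hrc : r ≤ exchangeCapacity (fun U => ρ U - ∑ i ∈ U, x i) e f) :
    memBase ρ d (fun i => x i + r * ((if i = f then 1 else 0) - (if i = e then 1 else 0))) := by
  obtain ⟨hx0, hxρ, hxd⟩ := hx
  have hsum : ∀ U : Finset E,
      ∑ i ∈ U, (x i + r * ((if i = f then 1 else 0) - (if i = e then 1 else 0))) =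
        ∑ i ∈ U, x i + r * ((if f ∈ U then 1 else 0) - (if e ∈ U then 1 else 0)) := by
    intro U
    rw [sum_add_distrib, ← mul_sum, sum_sub_distrib, sum_ite_eq', sum_ite_eq']
  refine ⟨fun i => ?_, fun U => ?_, by simpa [hsum] using hxd⟩
  · have hxi := hx0 i
    dsimp only
    split_ifs <;> subst_vars <;> linarith
  · rw [hsum]
    have hxU := hxρ U
    split_ifs with hf he
    · linarith
    · linarith [hrc.trans (exchangeCapacity_le _ hf he)]
    · linarith
    · linarith

end Transshipment

theorem stmt_7_general {E : Type*} [Fintype E] [DecidableEq E]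
    (ρ : Finset E → ℝ) (hsub : ∀ U V : Finset E, ρ (U ∪ V) + ρ (U ∩ V) ≤ ρ U + ρ V) (d : ℝ)
    (x y : E → ℝ) (hx : memBase ρ d x) (hy : memBase ρ d y) :
    ∃ t : E → E → ℝ,
      (∀ e f, 0 ≤ t e f) ∧
      (∀ e ∈ Finset.univ.filter (fun e => y e < x e),
        ∑ f ∈ Finset.univ.filter (fun e' => x e' < y e'), t e f = x e - y e) ∧
      (∀ f ∈ Finset.univ.filter (fun e => x e < y e),
        ∑ e ∈ Finset.univ.filter (fun e' => y e' < x e'), t e f = y f - x f) ∧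
      (∀ e ∈ Finset.univ.filter (fun e' => y e' < x e'),
        ∀ f ∈ Finset.univ.filter (fun e' => x e' < y e'),
          memBase ρ d
            (fun e' => x e' +
              t e f * ((if e' = f then 1 else 0) - (if e' = e then 1 else 0)))) := by
  obtain ⟨t, ⟨ht0, htcap⟩, hrow, hcol⟩ := exists_transshipment_le_exchangeCapacity
    (g := fun U => ρ U - ∑ e ∈ U, x e) (z := y - x)
    (fun U V => by linarith [hsub U V, sum_union_inter (s₁ := U) (s₂ := V) (f := x)])
    (fun U => sub_nonneg.2 (hx.2.1 U))
    (fun U => by simpa using hy.2.1 U) (by simp [hx.2.2, hy.2.2])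
  simp only [Pi.sub_apply, sub_pos, sub_neg, neg_sub] at hrow hcol
  refine ⟨t, ht0, fun e he => hrow e (mem_filter.1 he).2,
    fun f hf => hcol f (mem_filter.1 hf).2, fun e he f hf => ?_⟩
  have ht_le : t e f ≤ x e := calc
    t e f ≤ ∑ f with x f < y f, t e f := single_le_sum (fun j _ => ht0 e j) hf
    _ = x e - y e := hrow e (mem_filter.1 he).2
    _ ≤ x e := sub_le_self _ (hy.1 e)
  exact memBase_exchange hx (ht0 e f) ht_le (htcap e f)

/-- The transshipment existence fact (Lemma 3.2 of Timmermans–Harks 2017) used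
in the proof of Theorem 1 of the paper: for any two points `x, y` of the same
base polytope `P_ρ(d)` there is a non-negative transshipment from
`E⁻ = {e : x_e > y_e}` to `E⁺ = {e : y_e > x_e}` satisfying all supplies and
demands whose individual flows are feasible single-pair exchanges. -/
theorem stmt_7 {E : Type*} [Fintype E] [DecidableEq E]
    (ρ : Finset E → ℝ) (hρ : IsRank ρ) (d : ℝ) (hd : 0 < d)
    (x y : E → ℝ) (hx : memBase ρ d x) (hy : memBase ρ d y) :
    ∃ t : E → E → ℝ,
      (∀ e f, 0 ≤ t e f) ∧
      (∀ e ∈ Finset.univ.filter (fun e => y e < x e),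
        ∑ f ∈ Finset.univ.filter (fun e' => x e' < y e'), t e f = x e - y e) ∧
      (∀ f ∈ Finset.univ.filter (fun e => x e < y e),
        ∑ e ∈ Finset.univ.filter (fun e' => y e' < x e'), t e f = y f - x f) ∧
      (∀ e ∈ Finset.univ.filter (fun e' => y e' < x e'),
        ∀ f ∈ Finset.univ.filter (fun e' => x e' < y e'),
          memBase ρ d
            (fun e' => x e' +
              t e f * ((if e' = f then 1 else 0) - (if e' = e then 1 else 0)))) :=
  stmt_7_general ρ hρ.1 d x y hx hy
end
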